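/- Let V be a finite set with at least two elements, w : V × V → ℝ≥0 a symmetric weight function with w(v,v) = 0, s ∈ V a designated source, h : V∖{s} → ℕ an injective ordering, and 𝒫 a partition of V. For a block B ∈ 𝒫 with s ∉ B, set h_H(B) = min_{x ∈ B} h(x) and P_H(B) = |B|. Then for every nonempty collection ℱ ⊆ 𝒫 of blocks with s ∉ ∪ℱ, writing S' = ∪_{B ∈ ℱ} B, one has cut_H(ℱ) = cut_G(S'), min_{B ∈ ℱ} h_H(B) = LN(S'), and Σ_{B ∈ ℱ} |B| = |S'|. -/

import Mathlib

/-!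
Distinct blocks of a partition are disjoint, so a sum over `S' = ⋃ F` splits as a double sum over
the blocks `B ∈ F` and the points of `B`. Since the blocks cover `V`, the complement of `S'` is the
union of the blocks outside `F`. Splitting both sums of `cutVal w S'` along blocks gives `cutH`
(the convention `w_H(B, B) = 0` never intervenes, as `B ∈ F` and `B' ∉ F` differ), and splitting
the sum of ones gives the cardinality. For the lexicographic number, a minimum over a union is the
minimum of the minima; nonemptiness of `F` and of its blocks ensures that every minimum involved is
attained instead of being the junk value `sInf ∅ = 0`.
-/

open Finset

/-- The cut value of a set `S`: total weight of edges with exactly one endpoint in `S`. -/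
noncomputable def cutVal {V : Type*} [Fintype V] [DecidableEq V]
    (w : V → V → NNReal) (S : Finset V) : NNReal :=
  ∑ u ∈ S, ∑ v ∈ Sᶜ, w u v

/-- The lexicographic number of a set `S`: the minimum of `h` over `S`. -/
noncomputable def LN {α : Type*} (h : α → ℕ) (S : Finset α) : ℕ :=
  sInf (h '' (S : Set α))

/-- The weight between two blocks of the contracted graph `G/𝒫`. -/
noncomputable def wH {V : Type*} [DecidableEq V]
    (w : V → V → NNReal) (B B' : Finset V) : NNReal :=
  if B = B' then 0 else ∑ u ∈ B, ∑ v ∈ B', w u v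

/-- The cut value of a collection of blocks `F` in the contracted graph with
vertex set `parts`. -/
noncomputable def cutH {V : Type*} [DecidableEq V]
    (w : V → V → NNReal) (parts F : Finset (Finset V)) : NNReal :=
  ∑ B ∈ F, ∑ B' ∈ parts \ F, wH w B B'

theorem LN_le {α : Type*} (h : α → ℕ) {S : Finset α} {x : α} (hx : x ∈ S) : LN h S ≤ h x :=
  Nat.sInf_le ⟨x, hx, rfl⟩

theorem exists_LN_eq {α : Type*} (h : α → ℕ) {S : Finset α} (hS : S.Nonempty) :
    ∃ x ∈ S, h x = LN h S :=
  Nat.sInf_mem (s := h '' (S : Set α)) (Set.Nonempty.image h hS)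

theorem LN_biUnion {α : Type*} [DecidableEq α] (h : α → ℕ) {F : Finset (Finset α)}
    (hF : F.Nonempty) (hne : ∀ B ∈ F, B.Nonempty) :
    LN (fun B : Finset α => LN h B) F = LN h (F.biUnion id) := by
  obtain ⟨B, hB, hBeq⟩ := exists_LN_eq (fun B : Finset α => LN h B) hF
  obtain ⟨x, hx, hxeq⟩ := exists_LN_eq h (hne B hB)
  have hxF : x ∈ F.biUnion id := mem_biUnion.2 ⟨B, hB, hx⟩
  obtain ⟨y, hy, hyeq⟩ := exists_LN_eq h ⟨x, hxF⟩
  obtain ⟨C, hC, hyC⟩ := mem_biUnion.1 hy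
  have h1 : LN (fun B : Finset α => LN h B) F ≤ LN h C := LN_le (fun B => LN h B) hC
  have h2 : LN h C ≤ h y := LN_le h hyC
  have h3 : LN h (F.biUnion id) ≤ h x := LN_le h hxF
  omega

theorem compl_biUnion_parts {V : Type*} [Fintype V] [DecidableEq V]
    (P : Finpartition (Finset.univ : Finset V)) {F : Finset (Finset V)} (hF : F ⊆ P.parts) :
    (F.biUnion id)ᶜ = (P.parts \ F).biUnion id := by
  ext v
  simp only [mem_compl, mem_biUnion, mem_sdiff, id]
  constructor
  · intro hv
    obtain ⟨B, hB, hvB⟩ := P.exists_mem (mem_univ v)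
    exact ⟨B, ⟨hB, fun hBF => hv ⟨B, hBF, hvB⟩⟩, hvB⟩
  · rintro ⟨B, ⟨hB, hBF⟩, hvB⟩ ⟨C, hC, hvC⟩
    exact hBF (P.eq_of_mem_parts hB (hF hC) hvB hvC ▸ hC)

theorem cutH_eq_cutVal {V : Type*} [Fintype V] [DecidableEq V] (w : V → V → NNReal)
    (P : Finpartition (Finset.univ : Finset V)) {F : Finset (Finset V)} (hF : F ⊆ P.parts) :
    cutH w P.parts F = cutVal w (F.biUnion id) := by
  have hd : ((P.parts : Set (Finset V))).PairwiseDisjoint id := P.disjoint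
  unfold cutH cutVal
  rw [compl_biUnion_parts P hF, sum_biUnion (hd.subset (coe_subset.2 hF))]
  refine sum_congr rfl fun B hB => ?_
  simp_rw [sum_biUnion (hd.subset (coe_subset.2 (sdiff_subset (s := P.parts) (t := F))))]
  rw [sum_comm]
  refine sum_congr rfl fun B' hB' => ?_
  have hne : B ≠ B' := fun e => (mem_sdiff.1 hB').2 (e ▸ hB)
  simp [wH, hne]

/-- For a nonempty collection `ℱ` of blocks avoiding `s`, with `S' = ∪ℱ`:
`cut_H(ℱ) = cut_G(S')`, `min_{B ∈ ℱ} h_H(B) = LN(S')` where `h_H(B) = min_{x ∈ B} h(x)`,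
and `Σ_{B ∈ ℱ} |B| = |S'|`. -/
theorem stmt15 {V : Type*} [Fintype V] [DecidableEq V]
    (hV : 2 ≤ Fintype.card V)
    (w : V → V → NNReal) (hsymm : ∀ u v, w u v = w v u) (hdiag : ∀ v, w v v = 0)
    (s : V) (h : V → ℕ) (hinj : ∀ a b, a ≠ s → b ≠ s → h a = h b → a = b)
    (P : Finpartition (Finset.univ : Finset V))
    (F : Finset (Finset V)) (hF : F ⊆ P.parts) (hFne : F.Nonempty)
    (hs : s ∉ F.biUnion id) :
    cutH w P.parts F = cutVal w (F.biUnion id) ∧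
    LN (fun B : Finset V => LN h B) F = LN h (F.biUnion id) ∧
    ∑ B ∈ F, B.card = (F.biUnion id).card := by
  refine ⟨cutH_eq_cutVal w P hF,
    LN_biUnion h hFne fun B hB => P.nonempty_of_mem_parts (hF hB), ?_⟩
  have hd : ((P.parts : Set (Finset V))).PairwiseDisjoint id := P.disjoint
  exact (card_biUnion (hd.subset (coe_subset.2 hF))).symm
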